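/- arXiv:2304.02765 — 2 statements merged into one kernel-verified Lean document; each statement's English description precedes it below -/
import Mathlib

section
/- There exists a smooth function r : ℝ → ℂ such that: (i) J₁(θ) = Re( e^{iθ} r(θ) ) for all θ ∈ ℝ; (ii) for every m ≥ 0 there is a constant C_m > 0 with |r^{(m)}(θ)| ≤ C_m ⟨θ⟩^{−(m+1/2)} for all θ ∈ ℝ; (iii) there exist θ_* > 0 and c_* > 0 such that |r(θ)| ≥ c_* |θ|^{−1/2} for all |θ| > θ_*. -/
/-!
The amplitude is built from an exact contour shift, which avoids stationary phase.

An exact-derivative identity followed by `t = sin φ` turns the definition of `J₁` into Poisson's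
integral `J₁(θ) = (2θ/π) Re ∫₀¹ √(1 - t²) e^{iθt} dt` (`J1_poisson`). For `θ > 0` the segment
`[0, 1]` is pushed to `+i∞`: `√(1 - z²) e^{iθz}` is continuous on the closed half strip
`0 ≤ Re z ≤ 1`, `Im z ≥ 0` and holomorphic inside, its integral along `i[0, ∞)` is purely imaginary,
and on `1 + i[0, ∞)` it is `e^{iθ} e^{-θu} √(u² - 2iu)`. This gives (`J1_eq_amp`)
`J₁(θ) = Re (e^{iθ} A(θ))`, `A(θ) = -(2iθ/π) ∫₀^∞ e^{-θu} √(u² - 2iu) du`.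

The oscillation is now gone. Differentiating a Laplace transform brings down powers of `-u`, and
`|√(u² - 2iu)| ≤ u + 2√u` bounds the integrals by Gamma integrals, so that
`|A⁽ᵐ⁾(θ)| ≤ C θ^{-(m + 1/2)}` for `θ ≥ 1` (`norm_amp_le`). Since `Re √(u² - 2iu) ≥ √u`, the Laplace
transform is at least `Γ(3/2) θ^{-3/2}` in modulus, which is the lower bound (`le_norm_amp_zero`).

Finally `J₁` is odd, so `-conj A(-θ)` serves as the amplitude for `θ < 0`, and near `0` the trivial
amplitude `e^{-iθ} J₁(θ)` does; smooth cutoffs glue the three (`besselAmp`). All three satisfy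
`Re (e^{iθ} ·) = J₁`, hence so does the glued function, and only `|θ|` large matters for the bounds.
-/

open scoped Real BigOperators
open MeasureTheory

noncomputable section

def jb (j : ℤ) : ℝ := max 1 |(j : ℝ)|

def fc (u : ℝ → ℂ) (j : ℤ) : ℂ :=
  (1 / (2 * (π : ℂ))) * ∫ x in (0:ℝ)..(2 * π), u x * Complex.exp (-Complex.I * (j : ℂ) * (x : ℂ))

def fcR (u : ℝ → ℝ) (j : ℤ) : ℂ := fc (fun x => (u x : ℂ)) j

def sobNorm (s : ℝ) (u : ℝ → ℂ) : ℝ :=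
  Real.sqrt (∑' j : ℤ, jb j ^ (2 * s) * ‖fc u j‖ ^ 2)

def memHs (s : ℝ) (u : ℝ → ℂ) : Prop :=
  Summable (fun j : ℤ => jb j ^ (2 * s) * ‖fc u j‖ ^ 2)

def sobNormR (s : ℝ) (u : ℝ → ℝ) : ℝ := sobNorm s (fun x => (u x : ℂ))
def memHsR (s : ℝ) (u : ℝ → ℝ) : Prop := memHs s (fun x => (u x : ℂ))

def pairNorm (s : ℝ) (a b : ℝ → ℝ) : ℝ := sobNormR s a + sobNormR s b

def seqNorm (s : ℝ) (c : ℤ → ℂ) : ℝ :=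
  Real.sqrt (∑' j : ℤ, jb j ^ (2 * s) * ‖c j‖ ^ 2)

def memSeq (s : ℝ) (c : ℤ → ℂ) : Prop :=
  Summable (fun j : ℤ => jb j ^ (2 * s) * ‖c j‖ ^ 2)

def smoothPer (u : ℝ → ℝ) : Prop :=
  ContDiff ℝ (⊤ : ℕ∞) u ∧ Function.Periodic u (2 * π)

def J1 (θ : ℝ) : ℝ :=
  ((1 / (2 * (π : ℂ))) * ∫ φ in (0:ℝ)..(2 * π),
    Complex.exp (Complex.I * (θ : ℂ) * (Real.sin φ : ℂ)) * Complex.exp (-Complex.I * (φ : ℂ))).re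


section Asymptotics

open Set Filter Topology

/-- A family `D 0, D 1, D 2, …` on an open set `s`, each the derivative of the one before,
lists the iterated derivatives of `D 0` there. -/
lemma iteratedDeriv_tower {s : Set ℝ} (hs : IsOpen s) {D : ℕ → ℝ → ℂ}
    (h : ∀ m, ∀ x ∈ s, HasDerivAt (D m) (D (m + 1) x) x) (m : ℕ) :
    ∀ x ∈ s, iteratedDeriv m (D 0) x = D m x := by
  induction m with
  | zero => simp
  | succ m ih =>
    intro x hx
    rw [iteratedDeriv_succ]
    have : iteratedDeriv m (D 0) =ᶠ[𝓝 x] D m :=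
      (hs.eventually_mem hx).mono fun y hy => ih y hy
    rw [this.deriv_eq, (h m x hx).deriv]

lemma contDiffOn_tower {s : Set ℝ} (hs : IsOpen s) {D : ℕ → ℝ → ℂ}
    (h : ∀ m, ∀ x ∈ s, HasDerivAt (D m) (D (m + 1) x) x) :
    ContDiffOn ℝ (⊤ : ℕ∞) (D 0) s := by
  have key : ∀ n : ℕ, ∀ m, ContDiffOn ℝ n (D m) s := by
    intro n
    induction n with
    | zero =>
      intro m
      exact contDiffOn_zero.2 fun x hx => (h m x hx).continuousAt.continuousWithinAt
    | succ n ih =>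
      intro m
      push_cast
      rw [contDiffOn_succ_iff_deriv_of_isOpen hs]
      refine ⟨fun x hx => (h m x hx).differentiableAt.differentiableWithinAt, by simp, ?_⟩
      exact (ih (m + 1)).congr fun x hx => (h m x hx).deriv
  exact contDiffOn_infty.2 fun n => key n 0

/-! ### The Laplace representation of the amplitude -/

/-- The function `u ↦ √(u² - 2iu)` (principal branch): the boundary value of `√(1 - z²)` on the
vertical ray `z = 1 + iu`, `u ≥ 0`. -/
def edgeSqrt (u : ℝ) : ℂ := Complex.sqrt ((u : ℂ) ^ 2 - 2 * Complex.I * u)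

lemma continuous_edgeSqrt : Continuous edgeSqrt := by
  rw [continuous_iff_continuousAt]
  intro u
  have h0 : 0 ≤ ((u : ℂ) ^ 2 - 2 * Complex.I * u).re := by
    simp [pow_two]; nlinarith
  have := Complex.continuousAt_sqrt (Or.inl h0)
  exact ContinuousAt.comp (f := fun u : ℝ => (u : ℂ) ^ 2 - 2 * Complex.I * u) this
    (by fun_prop)

lemma norm_complexSqrt (z : ℂ) : ‖Complex.sqrt z‖ = √‖z‖ := by
  have h : Complex.sqrt z ^ 2 = z := by
    simp [Complex.sqrt]
  rw [eq_comm, Real.sqrt_eq_iff_mul_self_eq (norm_nonneg _) (norm_nonneg _), ← norm_mul, ← pow_two, h]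

lemma norm_edgeSqrt_le {u : ℝ} (hu : 0 ≤ u) : ‖edgeSqrt u‖ ≤ u + 2 * √u := by
  rw [edgeSqrt, norm_complexSqrt]
  apply Real.sqrt_le_iff.2
  refine ⟨by positivity, ?_⟩
  have : ‖(u : ℂ) ^ 2 - 2 * Complex.I * u‖ ≤ u ^ 2 + 2 * u := by
    refine (norm_sub_le _ _).trans ?_
    simp [abs_of_nonneg hu]
  have h2 := Real.sq_sqrt hu
  have h3 := Real.sqrt_nonneg u
  nlinarith [mul_nonneg hu h3]

lemma sqrt_le_re_edgeSqrt {u : ℝ} (hu : 0 ≤ u) : √u ≤ (edgeSqrt u).re := by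
  rw [edgeSqrt, Complex.sqrt, Complex.cpow_inv_two_re]
  apply Real.sqrt_le_sqrt
  have h1 : ((u : ℂ) ^ 2 - 2 * Complex.I * u).re = u ^ 2 := by
    simp [pow_two]
  have h2 : ((u : ℂ) ^ 2 - 2 * Complex.I * u).im = -(2 * u) := by
    simp [pow_two]
  have h3 := Complex.abs_im_le_norm ((u : ℂ) ^ 2 - 2 * Complex.I * u)
  rw [h2, abs_neg, abs_of_nonneg (by positivity)] at h3
  rw [h1]
  nlinarith [sq_nonneg u]

/-- The `m`-th derivative in `θ` of the Laplace transform `∫₀^∞ e^{-θu} √(u² - 2iu) du`. -/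
def lap (m : ℕ) (θ : ℝ) : ℂ :=
  ∫ u in Ioi (0 : ℝ), (((-u) ^ m * Real.exp (-(θ * u)) : ℝ) : ℂ) * edgeSqrt u

lemma integrableOn_pow_sqrt_exp (m : ℕ) {θ : ℝ} (hθ : 0 < θ) :
    IntegrableOn (fun u : ℝ => u ^ ((m : ℝ) + 3 / 2 - 1) * Real.exp (-(θ * u))) (Ioi 0) := by
  have := integrableOn_rpow_mul_exp_neg_mul_rpow (p := 1) (s := (m : ℝ) + 3 / 2 - 1) (b := θ)
    (by have : (0 : ℝ) ≤ m := m.cast_nonneg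
        linarith) one_pos hθ
  simpa using this

lemma integrableOn_pow_exp (m : ℕ) {θ : ℝ} (hθ : 0 < θ) :
    IntegrableOn (fun u : ℝ => u ^ ((m : ℝ) + 2 - 1) * Real.exp (-(θ * u))) (Ioi 0) := by
  have := integrableOn_rpow_mul_exp_neg_mul_rpow (p := 1) (s := (m : ℝ) + 2 - 1) (b := θ)
    (by have : (0 : ℝ) ≤ m := m.cast_nonneg
        linarith) one_pos hθ
  simpa using this

/-- The dominating function for the integrand of `lap m θ`. -/
def lapBound (m : ℕ) (θ u : ℝ) : ℝ :=
  u ^ ((m : ℝ) + 2 - 1) * Real.exp (-(θ * u))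
    + 2 * (u ^ ((m : ℝ) + 3 / 2 - 1) * Real.exp (-(θ * u)))

lemma integrableOn_lapBound (m : ℕ) {θ : ℝ} (hθ : 0 < θ) :
    IntegrableOn (lapBound m θ) (Ioi 0) :=
  (integrableOn_pow_exp m hθ).add ((integrableOn_pow_sqrt_exp m hθ).const_mul 2)

lemma norm_lap_integrand_le (m : ℕ) (θ : ℝ) {u : ℝ} (hu : 0 < u) :
    ‖(((-u) ^ m * Real.exp (-(θ * u)) : ℝ) : ℂ) * edgeSqrt u‖ ≤ lapBound m θ u := by
  have h1 : u ^ ((m : ℝ) + 2 - 1) = u ^ m * u := by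
    rw [show (m : ℝ) + 2 - 1 = m + 1 by ring, Real.rpow_add_one hu.ne', Real.rpow_natCast]
  have h2 : u ^ ((m : ℝ) + 3 / 2 - 1) = u ^ m * √u := by
    rw [show (m : ℝ) + 3 / 2 - 1 = m + 1 / 2 by ring, Real.rpow_add hu, Real.rpow_natCast,
      Real.sqrt_eq_rpow]
  rw [lapBound, h1, h2, norm_mul, Complex.norm_real, norm_mul, norm_pow, norm_neg,
    Real.norm_of_nonneg hu.le, Real.norm_of_nonneg (Real.exp_nonneg _)]
  have := mul_le_mul_of_nonneg_left (norm_edgeSqrt_le hu.le)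
    (show 0 ≤ u ^ m * Real.exp (-(θ * u)) by positivity)
  linarith

lemma continuous_lap_integrand (m : ℕ) (θ : ℝ) :
    Continuous fun u : ℝ => (((-u) ^ m * Real.exp (-(θ * u)) : ℝ) : ℂ) * edgeSqrt u := by
  have := continuous_edgeSqrt
  fun_prop

lemma integrableOn_lap_integrand (m : ℕ) {θ : ℝ} (hθ : 0 < θ) :
    IntegrableOn (fun u : ℝ => (((-u) ^ m * Real.exp (-(θ * u)) : ℝ) : ℂ) * edgeSqrt u)
      (Ioi 0) := by
  refine (integrableOn_lapBound m hθ).mono' (continuous_lap_integrand m θ).aestronglyMeasurable ?_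
  filter_upwards [ae_restrict_mem measurableSet_Ioi] with u hu
  exact norm_lap_integrand_le m θ hu

lemma hasDerivAt_lap (m : ℕ) {θ : ℝ} (hθ : 0 < θ) : HasDerivAt (lap m) (lap (m + 1) θ) θ := by
  refine (hasDerivAt_integral_of_dominated_loc_of_deriv_le
    (F := fun θ u => (((-u) ^ m * Real.exp (-(θ * u)) : ℝ) : ℂ) * edgeSqrt u)
    (F' := fun θ u => (((-u) ^ (m + 1) * Real.exp (-(θ * u)) : ℝ) : ℂ) * edgeSqrt u)
    (bound := lapBound (m + 1) (θ / 2)) (s := Ioi (θ / 2))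
    (Ioi_mem_nhds (by linarith)) (Eventually.of_forall fun x =>
      (continuous_lap_integrand m x).aestronglyMeasurable) (integrableOn_lap_integrand m hθ)
    (continuous_lap_integrand (m + 1) θ).aestronglyMeasurable ?_
    (integrableOn_lapBound (m + 1) (half_pos hθ)) ?_).2
  · filter_upwards [ae_restrict_mem measurableSet_Ioi] with u hu x hx
    refine (norm_lap_integrand_le (m + 1) x hu).trans ?_
    have hu' : 0 < u := hu
    have : Real.exp (-(x * u)) ≤ Real.exp (-(θ / 2 * u)) := by
      apply Real.exp_le_exp.2
      have : θ / 2 * u ≤ x * u := mul_le_mul_of_nonneg_right (le_of_lt hx) hu'.le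
      linarith
    unfold lapBound
    gcongr
  · refine Eventually.of_forall fun u x _ => ?_
    have h : HasDerivAt (fun x : ℝ => (-u) ^ m * Real.exp (-(x * u)))
        ((-u) ^ (m + 1) * Real.exp (-(x * u))) x := by
      have := (((hasDerivAt_id x).mul_const u).neg.exp).const_mul ((-u) ^ m)
      refine this.congr_deriv ?_
      simp only [id, Pi.neg_apply, pow_succ]
      ring
    exact h.ofReal_comp.mul_const _

lemma norm_lap_le (m : ℕ) : ∃ C : ℝ, 0 < C ∧ ∀ θ : ℝ, 1 ≤ θ →
    ‖lap m θ‖ ≤ C * θ ^ (-((m : ℝ) + 3 / 2)) := by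
  have hm : (0 : ℝ) ≤ m := m.cast_nonneg
  refine ⟨Real.Gamma (m + 2) + 2 * Real.Gamma (m + 3 / 2), ?_, fun θ hθ => ?_⟩
  · have := Real.Gamma_pos_of_pos (show (0 : ℝ) < m + 2 by linarith)
    have := Real.Gamma_pos_of_pos (show (0 : ℝ) < m + 3 / 2 by linarith)
    linarith
  have h0 : 0 < θ := by linarith
  have h1 : ‖lap m θ‖ ≤ ∫ u in Ioi (0 : ℝ), lapBound m θ u := by
    refine norm_integral_le_of_norm_le (integrableOn_lapBound m h0) ?_
    filter_upwards [ae_restrict_mem measurableSet_Ioi] with u hu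
    exact norm_lap_integrand_le m θ hu
  refine h1.trans ?_
  unfold lapBound
  rw [integral_add (integrableOn_pow_exp m h0) ((integrableOn_pow_sqrt_exp m h0).const_mul 2),
    integral_const_mul, Real.integral_rpow_mul_exp_neg_mul_Ioi (by linarith) h0,
    Real.integral_rpow_mul_exp_neg_mul_Ioi (by linarith) h0, one_div,
    Real.inv_rpow h0.le, Real.inv_rpow h0.le, ← Real.rpow_neg h0.le, ← Real.rpow_neg h0.le]
  have h2 : θ ^ (-((m : ℝ) + 2)) ≤ θ ^ (-((m : ℝ) + 3 / 2)) :=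
    Real.rpow_le_rpow_of_exponent_le hθ (by linarith)
  have h3 := Real.Gamma_pos_of_pos (show (0 : ℝ) < m + 2 by linarith)
  nlinarith

/-- Since `Re √(u² - 2iu) ≥ √u`, no cancellation occurs in the Laplace integral. -/
lemma le_norm_lap_zero {θ : ℝ} (hθ : 0 < θ) :
    Real.Gamma (3 / 2) * θ ^ (-(3 / 2 : ℝ)) ≤ ‖lap 0 θ‖ := by
  have hi := integrableOn_lap_integrand 0 hθ
  have h1 : ∫ u in Ioi (0 : ℝ), u ^ ((3 / 2 : ℝ) - 1) * Real.exp (-(θ * u)) ≤ (lap 0 θ).re := by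
    have := integral_re hi
    simp only [RCLike.re_to_complex] at this
    rw [lap, ← this]
    refine setIntegral_mono_on ?_ hi.re measurableSet_Ioi ?_
    · simpa using integrableOn_pow_sqrt_exp 0 hθ
    · intro u hu
      have hu' : 0 ≤ u := le_of_lt hu
      simp only [pow_zero, one_mul, Complex.re_ofReal_mul]
      rw [show (3 / 2 : ℝ) - 1 = 1 / 2 by norm_num, ← Real.sqrt_eq_rpow, mul_comm]
      exact mul_le_mul_of_nonneg_left (sqrt_le_re_edgeSqrt hu') (Real.exp_nonneg _)
  rw [Real.integral_rpow_mul_exp_neg_mul_Ioi (by norm_num) hθ, one_div, Real.inv_rpow hθ.le,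
    ← Real.rpow_neg hθ.le, mul_comm] at h1
  exact h1.trans (Complex.re_le_norm _)

/-- The derivatives, for `θ > 0`, of the amplitude
`amp 0 θ = -(2iθ/π) ∫₀^∞ e^{-θu} √(u² - 2iu) du` (which is `e^{-iθ}` times a Hankel function).
For `m = 0` the value of `lap (m - 1)` is irrelevant, its coefficient being `0`. -/
def amp (m : ℕ) (θ : ℝ) : ℂ :=
  (-2 * Complex.I / π) * (θ * lap m θ + m * lap (m - 1) θ)

lemma hasDerivAt_amp (m : ℕ) {θ : ℝ} (hθ : 0 < θ) : HasDerivAt (amp m) (amp (m + 1) θ) θ := by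
  have h1 := ((hasDerivAt_id θ).ofReal_comp.mul (hasDerivAt_lap m hθ))
  have h2 : HasDerivAt (fun θ => (m : ℂ) * lap (m - 1) θ) (m * lap m θ) θ := by
    rcases m with _ | m
    · simpa using hasDerivAt_const θ (0 : ℂ)
    · exact (hasDerivAt_lap m hθ).const_mul _
  refine ((h1.add h2).const_mul (-2 * Complex.I / π)).congr_deriv ?_
  simp only [amp, id, Nat.add_sub_cancel]
  push_cast
  ring

lemma norm_amp_const : ‖-2 * Complex.I / (π : ℂ)‖ = 2 / π := by
  simp [abs_of_pos Real.pi_pos]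

lemma norm_amp_le (m : ℕ) : ∃ C : ℝ, 0 < C ∧ ∀ θ : ℝ, 1 ≤ θ →
    ‖amp m θ‖ ≤ C * θ ^ (-((m : ℝ) + 1 / 2)) := by
  obtain ⟨C, hC, h⟩ := norm_lap_le m
  obtain ⟨C', hC', h'⟩ := norm_lap_le (m - 1)
  have hpi := Real.pi_pos
  refine ⟨2 / π * (C + m * C'), by positivity, fun θ hθ => ?_⟩
  have h0 : 0 < θ := by linarith
  rw [amp, norm_mul, norm_amp_const, mul_assoc]
  refine mul_le_mul_of_nonneg_left ?_ (by positivity)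
  refine (norm_add_le _ _).trans ?_
  rw [add_mul]
  apply add_le_add
  · rw [norm_mul, Complex.norm_real, Real.norm_of_nonneg h0.le]
    refine (mul_le_mul_of_nonneg_left (h θ hθ) h0.le).trans_eq ?_
    rw [show -((m : ℝ) + 1 / 2) = -((m : ℝ) + 3 / 2) + 1 by ring, Real.rpow_add_one h0.ne']
    ring
  · rcases m with _ | m
    · simp
    · rw [norm_mul, Complex.norm_natCast, mul_assoc]
      refine mul_le_mul_of_nonneg_left ((h' θ hθ).trans_eq ?_) (by positivity)
      congr 2
      push_cast [Nat.add_sub_cancel]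
      ring

lemma le_norm_amp_zero {θ : ℝ} (hθ : 0 < θ) :
    2 / π * Real.Gamma (3 / 2) * θ ^ (-(1 / 2 : ℝ)) ≤ ‖amp 0 θ‖ := by
  have hpi := Real.pi_pos
  rw [amp, norm_mul, norm_amp_const, mul_assoc]
  refine mul_le_mul_of_nonneg_left ?_ (by positivity)
  simp only [Nat.cast_zero, zero_mul, add_zero]
  rw [norm_mul, Complex.norm_real, Real.norm_of_nonneg hθ.le]
  refine le_trans (le_of_eq ?_) (mul_le_mul_of_nonneg_left (le_norm_lap_zero hθ) hθ.le)
  rw [show -(1 / 2 : ℝ) = -(3 / 2) + 1 by norm_num, Real.rpow_add_one hθ.ne']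
  ring

/-! ### Poisson's integral and the contour shift -/

/-- The real part commutes with the integral of a continuous function. -/
lemma re_intervalIntegral {f : ℝ → ℂ} (hf : Continuous f) (a b : ℝ) :
    (∫ x in a..b, f x).re = ∫ x in a..b, (f x).re :=
  (Complex.reCLM.intervalIntegral_comp_comm (hf.intervalIntegrable a b)).symm

lemma J1_eq_cos (θ : ℝ) :
    J1 θ = 1 / (2 * π) * ∫ φ in (0 : ℝ)..(2 * π), Real.cos (θ * Real.sin φ - φ) := by
  unfold J1
  rw [show (1 / (2 * (π : ℂ))) = ((1 / (2 * π) : ℝ) : ℂ) by push_cast; rfl,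
    Complex.re_ofReal_mul, re_intervalIntegral (by fun_prop)]
  congr 1
  refine intervalIntegral.integral_congr fun φ _ => ?_
  rw [← Complex.exp_add, show Complex.I * (θ : ℂ) * (Real.sin φ : ℂ) + -Complex.I * (φ : ℂ)
    = ((θ * Real.sin φ - φ : ℝ) : ℂ) * Complex.I by push_cast; ring, Complex.exp_ofReal_mul_I_re]

lemma integral_cos_sub (θ : ℝ) (hθ : θ ≠ 0) :
    ∫ φ in (0 : ℝ)..(2 * π), Real.cos (θ * Real.sin φ - φ)
      = θ * ∫ φ in (0 : ℝ)..(2 * π), Real.cos φ ^ 2 * Real.cos (θ * Real.sin φ) := by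
  -- The two integrands differ by an exact derivative of a periodic function.
  have h := intervalIntegral.integral_eq_sub_of_hasDerivAt (a := 0) (b := 2 * π)
    (f := fun φ => Real.sin (θ * Real.sin φ) / θ - Real.sin (θ * Real.sin φ) * Real.cos φ)
    (f' := fun φ => Real.cos (θ * Real.sin φ - φ)
      - θ * (Real.cos φ ^ 2 * Real.cos (θ * Real.sin φ))) ?_
    (Continuous.intervalIntegrable (by fun_prop) _ _)
  · rw [intervalIntegral.integral_sub (Continuous.intervalIntegrable (by fun_prop) _ _)
      (Continuous.intervalIntegrable (by fun_prop) _ _), intervalIntegral.integral_const_mul] at h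
    simp only [Real.sin_zero, Real.sin_two_pi, mul_zero, zero_div, zero_mul, sub_zero] at h
    linarith
  · intro φ _
    have h1 := ((Real.hasDerivAt_sin φ).const_mul θ).sin
    refine ((h1.div_const θ).sub (h1.mul (Real.hasDerivAt_cos φ))).congr_deriv ?_
    rw [Real.cos_sub]
    field_simp
    ring

lemma J1_neg {θ : ℝ} (hθ : θ ≠ 0) : J1 (-θ) = -J1 θ := by
  rw [J1_eq_cos, J1_eq_cos, integral_cos_sub _ hθ, integral_cos_sub _ (neg_ne_zero.2 hθ)]
  simp only [neg_mul, Real.cos_neg, mul_neg]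

/-- Poisson's integral: `J₁(θ) = (2θ/π) Re ∫₀¹ √(1 - t²) e^{iθt} dt`. -/
lemma J1_poisson {θ : ℝ} (hθ : θ ≠ 0) :
    J1 θ = 2 * θ / π * ∫ t in (0 : ℝ)..1, √(1 - t ^ 2) * Real.cos (θ * t) := by
  set g : ℝ → ℝ := fun t => √(1 - t ^ 2) * Real.cos (θ * t) with hg
  have hgc : Continuous g := by fun_prop
  have h1 : ∫ φ in (0 : ℝ)..(2 * π), Real.cos φ ^ 2 * Real.cos (θ * Real.sin φ)
      = 2 * ∫ φ in (-(π / 2))..(π / 2), Real.cos φ ^ 2 * Real.cos (θ * Real.sin φ) := by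
    set h : ℝ → ℝ := fun φ => Real.cos φ ^ 2 * Real.cos (θ * Real.sin φ)
    have hc : Continuous h := by fun_prop
    have hp : Function.Periodic h π := fun φ => by
      simp [h, Real.cos_add_pi, Real.sin_add_pi]
    have e1 : ∫ φ in (0 : ℝ)..π, h φ = ∫ φ in (-(π / 2))..(π / 2), h φ := by
      have := hp.intervalIntegral_add_eq 0 (-(π / 2))
      rwa [zero_add, show -(π / 2) + π = π / 2 by ring] at this
    have e2 : ∫ φ in π..(2 * π), h φ = ∫ φ in (-(π / 2))..(π / 2), h φ := by
      have := hp.intervalIntegral_add_eq π (-(π / 2))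
      rwa [show π + π = 2 * π by ring, show -(π / 2) + π = π / 2 by ring] at this
    rw [← intervalIntegral.integral_add_adjacent_intervals (hc.intervalIntegrable 0 π)
      (hc.intervalIntegrable π (2 * π)), e1, e2]
    ring
  have h2 : ∫ φ in (-(π / 2))..(π / 2), Real.cos φ ^ 2 * Real.cos (θ * Real.sin φ)
      = ∫ t in (-1 : ℝ)..1, g t := by
    have := intervalIntegral.integral_comp_mul_deriv (a := -(π / 2)) (b := π / 2)
      (f := Real.sin) (f' := Real.cos) (g := g) (fun x _ => Real.hasDerivAt_sin x)
      Real.continuous_cos.continuousOn hgc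
    rw [Real.sin_neg, Real.sin_pi_div_two] at this
    rw [← this]
    refine intervalIntegral.integral_congr fun φ hφ => ?_
    rw [uIcc_of_le (by linarith [Real.pi_pos])] at hφ
    have hcos := Real.cos_nonneg_of_mem_Icc hφ
    simp only [hg, Function.comp]
    rw [← Real.abs_cos_eq_sqrt_one_sub_sin_sq, abs_of_nonneg hcos]
    ring
  have h3 : ∫ t in (-1 : ℝ)..1, g t = 2 * ∫ t in (0 : ℝ)..1, g t := by
    have e : ∫ t in (-1 : ℝ)..0, g t = ∫ t in (0 : ℝ)..1, g t := by
      have := intervalIntegral.integral_comp_neg (a := 0) (b := 1) g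
      rw [neg_zero] at this
      rw [← this]
      refine intervalIntegral.integral_congr fun t _ => ?_
      simp [hg]
    rw [← intervalIntegral.integral_add_adjacent_intervals (hgc.intervalIntegrable (-1) 0)
      (hgc.intervalIntegrable 0 1), e]
    ring
  rw [J1_eq_cos, integral_cos_sub θ hθ, h1, h2, h3]
  field_simp

/-- The integrand `√(1 - z²) e^{iθz}` of Poisson's integral, continued to complex `z`. -/
def poissonFun (θ : ℝ) (z : ℂ) : ℂ :=
  Complex.sqrt (1 - z ^ 2) * Complex.exp (Complex.I * θ * z)

lemma one_sub_sq_re (z : ℂ) : (1 - z ^ 2).re = 1 - z.re ^ 2 + z.im ^ 2 := by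
  simp [pow_two]; ring

/-- Cauchy's theorem on the rectangle with vertices `0`, `1`, `1 + iR`, `iR`. -/
lemma poissonFun_rect (θ : ℝ) {R : ℝ} (hR : 0 < R) :
    (∫ x in (0 : ℝ)..1, poissonFun θ x) - (∫ x in (0 : ℝ)..1, poissonFun θ (x + R * Complex.I))
      + Complex.I * (∫ y in (0 : ℝ)..R, poissonFun θ (1 + y * Complex.I))
      - Complex.I * (∫ y in (0 : ℝ)..R, poissonFun θ (y * Complex.I)) = 0 := by
  have h := Complex.integral_boundary_rect_eq_zero_of_continuousOn_of_differentiableOn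
    (poissonFun θ) 0 (1 + R * Complex.I) ?_ ?_
  · simpa using h
  · intro z hz
    simp only [Complex.zero_re, Complex.zero_im, Complex.add_re, Complex.one_re, Complex.mul_re,
      Complex.ofReal_re, Complex.I_re, mul_zero, Complex.ofReal_im, Complex.I_im, mul_one,
      sub_self, add_zero, Complex.add_im, Complex.one_im, Complex.mul_im, zero_add,
      Complex.mem_reProdIm, uIcc_of_le zero_le_one, uIcc_of_le hR.le] at hz
    have h0 : 0 ≤ (1 - z ^ 2).re := by
      rw [one_sub_sq_re]; nlinarith [hz.1.1, hz.1.2, sq_nonneg z.im]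
    refine ContinuousAt.continuousWithinAt (ContinuousAt.mul ?_ (by fun_prop))
    exact ContinuousAt.comp (f := fun z : ℂ => 1 - z ^ 2) (Complex.continuousAt_sqrt (Or.inl h0))
      (by fun_prop)
  · intro z hz
    simp only [Complex.zero_re, Complex.zero_im, Complex.add_re, Complex.one_re, Complex.mul_re,
      Complex.ofReal_re, Complex.I_re, mul_zero, Complex.ofReal_im, Complex.I_im, mul_one,
      sub_self, add_zero, Complex.add_im, Complex.one_im, Complex.mul_im, zero_add,
      Complex.mem_reProdIm, min_eq_left zero_le_one, max_eq_right zero_le_one,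
      min_eq_left hR.le, max_eq_right hR.le] at hz
    have h0 : 0 < (1 - z ^ 2).re := by
      rw [one_sub_sq_re]; nlinarith [hz.1.1, hz.1.2, sq_nonneg z.im]
    refine DifferentiableAt.differentiableWithinAt (DifferentiableAt.mul ?_ (by fun_prop))
    exact DifferentiableAt.comp (f := fun z : ℂ => 1 - z ^ 2) z
      (Complex.differentiableAt_sqrt (Or.inl h0)) (by fun_prop)

lemma poissonFun_bottom (θ t : ℝ) (ht : t ∈ Icc (0 : ℝ) 1) :
    (poissonFun θ t).re = √(1 - t ^ 2) * Real.cos (θ * t) := by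
  have h0 : 0 ≤ 1 - t ^ 2 := by nlinarith [ht.1, ht.2]
  have h1 : (1 - (t : ℂ) ^ 2) = ((1 - t ^ 2 : ℝ) : ℂ) := by push_cast; rfl
  rw [poissonFun, h1, Complex.sqrt_of_nonneg (Complex.zero_le_real.2 h0), Complex.re_ofReal_mul,
    Complex.ofReal_re, show Complex.I * (θ : ℂ) * (t : ℂ) = ((θ * t : ℝ) : ℂ) * Complex.I by
      push_cast; ring, Complex.exp_ofReal_mul_I_re]

/-- On the imaginary axis the integrand is real. -/
lemma poissonFun_left (θ y : ℝ) : poissonFun θ (y * Complex.I)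
    = ((√(1 + y ^ 2) * Real.exp (-(θ * y)) : ℝ) : ℂ) := by
  have h1 : (1 - ((y : ℂ) * Complex.I) ^ 2) = ((1 + y ^ 2 : ℝ) : ℂ) := by
    rw [mul_pow, Complex.I_sq]; push_cast; ring
  rw [poissonFun, h1, Complex.sqrt_of_nonneg (Complex.zero_le_real.2 (by positivity)),
    show Complex.I * (θ : ℂ) * ((y : ℂ) * Complex.I) = ((-(θ * y) : ℝ) : ℂ) by
      push_cast; linear_combination (θ : ℂ) * y * Complex.I_sq]
  rw [Complex.ofReal_re, ← Complex.ofReal_exp, ← Complex.ofReal_mul]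

lemma poissonFun_right (θ y : ℝ) : poissonFun θ (1 + y * Complex.I)
    = Complex.exp (Complex.I * θ) * ((((-y) ^ 0 * Real.exp (-(θ * y)) : ℝ) : ℂ) * edgeSqrt y) := by
  have h1 : (1 - (1 + (y : ℂ) * Complex.I) ^ 2) = (y : ℂ) ^ 2 - 2 * Complex.I * y := by
    linear_combination -(y : ℂ) ^ 2 * Complex.I_sq
  have h2 : Complex.I * (θ : ℂ) * (1 + (y : ℂ) * Complex.I)
      = Complex.I * θ + ((-(θ * y) : ℝ) : ℂ) := by
      push_cast; linear_combination (θ : ℂ) * y * Complex.I_sq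
  rw [poissonFun, h1, h2, Complex.exp_add, edgeSqrt, ← Complex.ofReal_exp, pow_zero, one_mul]
  ring

lemma norm_poissonFun_top_le (θ : ℝ) {x R : ℝ} (hx : x ∈ Icc (0 : ℝ) 1) (hR : 0 ≤ R) :
    ‖poissonFun θ (x + R * Complex.I)‖ ≤ (R + 2) * Real.exp (-(θ * R)) := by
  rw [poissonFun, norm_mul, norm_complexSqrt, Complex.norm_exp]
  have h1 : (Complex.I * (θ : ℂ) * ((x : ℂ) + R * Complex.I)).re = -(θ * R) := by simp
  rw [h1]
  refine mul_le_mul_of_nonneg_right (Real.sqrt_le_iff.2 ⟨by linarith, ?_⟩) (Real.exp_nonneg _)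
  have h2 : ‖(x : ℂ) + R * Complex.I‖ ≤ 1 + R := by
    refine (norm_add_le _ _).trans ?_
    simp only [Complex.norm_real, norm_mul, Complex.norm_I, mul_one, Real.norm_eq_abs,
      abs_of_nonneg hx.1, abs_of_nonneg hR]
    linarith [hx.2]
  have h3 : ‖1 - ((x : ℂ) + R * Complex.I) ^ 2‖ ≤ 1 + (1 + R) ^ 2 := by
    refine (norm_sub_le _ _).trans ?_
    rw [norm_one, norm_pow]
    gcongr
  nlinarith

/-- Shifting the contour of Poisson's integral to the rays `i[0, ∞)`, which contributes nothing to
the real part, and `1 + i[0, ∞)`, which gives the amplitude. -/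
lemma J1_eq_amp {θ : ℝ} (hθ : 0 < θ) : J1 θ = (Complex.exp (Complex.I * θ) * amp 0 θ).re := by
  set E := Complex.exp (Complex.I * θ) with hE
  set P := ∫ t in (0 : ℝ)..1, √(1 - t ^ 2) * Real.cos (θ * t) with hP
  set F : ℝ → ℂ := fun u => (((-u) ^ 0 * Real.exp (-(θ * u)) : ℝ) : ℂ) * edgeSqrt u with hF
  have hbot : (∫ x in (0 : ℝ)..1, poissonFun θ x).re = P := by
    have hi : IntervalIntegrable (fun x : ℝ => poissonFun θ x) volume 0 1 := by
      refine ContinuousOn.intervalIntegrable fun x hx => ContinuousAt.continuousWithinAt ?_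
      rw [uIcc_of_le zero_le_one] at hx
      have h0 : 0 ≤ (1 - (x : ℂ) ^ 2).re := by
        rw [one_sub_sq_re, Complex.ofReal_re, Complex.ofReal_im]
        nlinarith [hx.1, hx.2]
      refine ContinuousAt.mul ?_ (by fun_prop)
      exact ContinuousAt.comp (f := fun x : ℝ => 1 - (x : ℂ) ^ 2)
        (Complex.continuousAt_sqrt (Or.inl h0)) (by fun_prop)
    refine (Complex.reCLM.intervalIntegral_comp_comm hi).symm.trans ?_
    refine intervalIntegral.integral_congr fun x hx => ?_
    rw [uIcc_of_le zero_le_one] at hx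
    exact poissonFun_bottom θ x hx
  have hrect : ∀ R : ℝ, 0 < R →
      P = (∫ x in (0 : ℝ)..1, poissonFun θ (x + R * Complex.I)).re
        + (-Complex.I * (E * ∫ u in (0 : ℝ)..R, F u)).re := by
    intro R hR
    have h := congrArg Complex.re (poissonFun_rect θ hR)
    simp_rw [poissonFun_right, poissonFun_left] at h
    rw [intervalIntegral.integral_const_mul, intervalIntegral.integral_ofReal] at h
    rw [Complex.sub_re, Complex.add_re, Complex.sub_re, hbot] at h
    simp only [Complex.I_mul_re, Complex.ofReal_im, neg_zero, Complex.zero_re, sub_zero] at h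
    rw [neg_mul, Complex.neg_re, Complex.I_mul_re]
    linarith
  have htop : Tendsto (fun R : ℝ => (∫ x in (0 : ℝ)..1, poissonFun θ (x + R * Complex.I)))
      atTop (𝓝 0) := by
    refine squeeze_zero_norm' (a := fun R : ℝ => (R + 2) * Real.exp (-(θ * R))) ?_ ?_
    · filter_upwards [eventually_ge_atTop 0] with R hR
      have := intervalIntegral.norm_integral_le_of_norm_le_const (a := 0) (b := 1)
        (f := fun x : ℝ => poissonFun θ (x + R * Complex.I))
        (C := (R + 2) * Real.exp (-(θ * R))) fun x hx => by
          rw [uIoc_of_le zero_le_one] at hx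
          exact norm_poissonFun_top_le θ ⟨hx.1.le, hx.2⟩ hR
      simpa using this
    · have h1 := Real.tendsto_pow_mul_exp_neg_atTop_nhds_zero 1
      have h0 := Real.tendsto_pow_mul_exp_neg_atTop_nhds_zero 0
      have hl : Tendsto (fun R : ℝ => θ * R) atTop atTop := tendsto_id.const_mul_atTop hθ
      have := ((h1.comp hl).const_mul θ⁻¹).add ((h0.comp hl).const_mul 2)
      simp only [mul_zero, add_zero] at this
      refine this.congr fun R => ?_
      simp only [Function.comp, pow_one, pow_zero]
      field_simp
  have hright : Tendsto (fun R : ℝ => ∫ u in (0 : ℝ)..R, F u) atTop (𝓝 (lap 0 θ)) :=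
    intervalIntegral_tendsto_integral_Ioi 0 (integrableOn_lap_integrand 0 hθ) tendsto_id
  have hlim := ((Complex.continuous_re.tendsto _).comp htop).add
    ((Complex.continuous_re.tendsto _).comp ((hright.const_mul E).const_mul (-Complex.I)))
  have hPeq : P = (-Complex.I * (E * lap 0 θ)).re := by
    have hc : Tendsto (fun _ : ℝ => P) atTop (𝓝 P) := tendsto_const_nhds
    have := tendsto_nhds_unique (hc.congr' ?_) hlim
    · simpa using this
    · filter_upwards [eventually_gt_atTop 0] with R hR
      exact hrect R hR
  rw [J1_poisson hθ.ne', ← hP, hPeq, ← Complex.re_ofReal_mul]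
  congr 1
  rw [amp]
  push_cast
  ring

/-! ### Smoothness and gluing -/

/-- Up to the factor `1 / 2π`, the `m`-th derivative of the complex integral defining `J₁`. -/
def besselDeriv (m : ℕ) (θ : ℝ) : ℂ :=
  ∫ φ in (0 : ℝ)..(2 * π), (Complex.I * (Real.sin φ : ℂ)) ^ m *
    (Complex.exp (Complex.I * (θ : ℂ) * (Real.sin φ : ℂ)) * Complex.exp (-Complex.I * (φ : ℂ)))

lemma hasDerivAt_besselDeriv (m : ℕ) (θ : ℝ) :
    HasDerivAt (besselDeriv m) (besselDeriv (m + 1) θ) θ := by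
  refine (intervalIntegral.hasDerivAt_integral_of_dominated_loc_of_deriv_le
    (F := fun (θ : ℝ) (φ : ℝ) => (Complex.I * (Real.sin φ : ℂ)) ^ m *
      (Complex.exp (Complex.I * (θ : ℂ) * (Real.sin φ : ℂ)) * Complex.exp (-Complex.I * (φ : ℂ))))
    (F' := fun (θ : ℝ) (φ : ℝ) => (Complex.I * (Real.sin φ : ℂ)) ^ (m + 1) *
      (Complex.exp (Complex.I * (θ : ℂ) * (Real.sin φ : ℂ)) * Complex.exp (-Complex.I * (φ : ℂ))))
    (bound := fun _ => 1) (s := univ) univ_mem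
    (Eventually.of_forall fun x => Continuous.aestronglyMeasurable (by fun_prop))
    (Continuous.intervalIntegrable (by fun_prop) _ _)
    (Continuous.aestronglyMeasurable (by fun_prop)) ?_
    (continuous_const.intervalIntegrable _ _) ?_).2
  · refine Eventually.of_forall fun φ _ x _ => ?_
    have h1 : ‖Complex.exp (Complex.I * (x : ℂ) * (Real.sin φ : ℂ))‖ = 1 := by
      rw [Complex.norm_exp]; simp
    have h2 : ‖Complex.exp (-Complex.I * (φ : ℂ))‖ = 1 := by
      rw [Complex.norm_exp]; simp
    rw [norm_mul, norm_mul, h1, h2, norm_pow, norm_mul, Complex.norm_I, Complex.norm_real, one_mul,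
      mul_one, mul_one]
    exact pow_le_one₀ (norm_nonneg _) (Real.abs_sin_le_one φ)
  · refine Eventually.of_forall fun φ _ x _ => ?_
    have h := ((((hasDerivAt_id x).ofReal_comp.const_mul Complex.I).mul_const
      (Real.sin φ : ℂ)).cexp.mul_const (Complex.exp (-Complex.I * (φ : ℂ)))).const_mul
      ((Complex.I * (Real.sin φ : ℂ)) ^ m)
    refine h.congr_deriv ?_
    simp only [id, pow_succ]
    push_cast
    ring

lemma contDiff_J1 : ContDiff ℝ (⊤ : ℕ∞) J1 := by
  have h : ContDiff ℝ (⊤ : ℕ∞) (besselDeriv 0) :=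
    contDiffOn_univ.1 (contDiffOn_tower isOpen_univ fun m x _ => hasDerivAt_besselDeriv m x)
  have h2 : J1 = fun θ => Complex.reCLM ((1 / (2 * (π : ℂ))) * besselDeriv 0 θ) := by
    funext θ
    simp [J1, besselDeriv]
  rw [h2]
  exact Complex.reCLM.contDiff.comp (contDiff_const.mul h)

/-- A smooth cutoff, equal to `0` on `(-∞, 1]` and to `1` on `[2, ∞)`. -/
def cut (θ : ℝ) : ℝ := Real.smoothTransition (θ - 1)

lemma cut_of_le {θ : ℝ} (h : θ ≤ 1) : cut θ = 0 :=
  Real.smoothTransition.zero_of_nonpos (by linarith)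

lemma cut_of_ge {θ : ℝ} (h : 2 ≤ θ) : cut θ = 1 :=
  Real.smoothTransition.one_of_one_le (by linarith)

lemma contDiff_cut : ContDiff ℝ (⊤ : ℕ∞) cut :=
  Real.smoothTransition.contDiff.comp (contDiff_id.sub contDiff_const)

/-- The amplitude on `θ > 0`, cut off away from its singularity at `θ = 0`. -/
def cutAmp (θ : ℝ) : ℂ := (cut θ : ℂ) * amp 0 θ

lemma contDiff_cutAmp : ContDiff ℝ (⊤ : ℕ∞) cutAmp := by
  rw [contDiff_iff_contDiffAt]
  intro θ
  rcases lt_or_ge 0 θ with h | h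
  · have h1 : ContDiffAt ℝ (⊤ : ℕ∞) (amp 0) θ :=
      (contDiffOn_tower isOpen_Ioi (s := Ioi 0) fun m x hx => hasDerivAt_amp m hx).contDiffAt
        (Ioi_mem_nhds h)
    exact (Complex.ofRealCLM.contDiff.comp contDiff_cut).contDiffAt.mul h1
  · refine (contDiffAt_const (c := (0 : ℂ))).congr_of_eventuallyEq ?_
    filter_upwards [Iio_mem_nhds (show θ < 1 by linarith)] with x hx
    simp [cutAmp, cut_of_le (le_of_lt hx)]

lemma re_exp_mul_cutAmp (θ : ℝ) :
    (Complex.exp (Complex.I * θ) * cutAmp θ).re = cut θ * J1 θ := by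
  rcases lt_or_ge 0 θ with h | h
  · rw [J1_eq_amp h, ← Complex.re_ofReal_mul]
    congr 1
    rw [cutAmp]
    ring
  · simp [cutAmp, cut_of_le (h.trans zero_le_one)]

/-- The function `r`: the amplitude for `θ ≥ 2`, its reflection `-conj (amp 0 (-θ))` for `θ ≤ -2`
(since `J₁` is odd), and a smooth interpolation with `e^{-iθ} J₁(θ)` in between. -/
def besselAmp (θ : ℝ) : ℂ :=
  cutAmp θ - (starRingEnd ℂ) (cutAmp (-θ))
    + ((1 - cut θ - cut (-θ) : ℝ) : ℂ) * (Complex.exp (-(Complex.I * θ)) * (J1 θ : ℂ))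

lemma contDiff_besselAmp : ContDiff ℝ (⊤ : ℕ∞) besselAmp := by
  have h1 : ContDiff ℝ (⊤ : ℕ∞) fun θ : ℝ => (starRingEnd ℂ) (cutAmp (-θ)) :=
    Complex.conjCLE.contDiff.comp (contDiff_cutAmp.comp contDiff_neg)
  have h2 : ContDiff ℝ (⊤ : ℕ∞) fun θ : ℝ => ((1 - cut θ - cut (-θ) : ℝ) : ℂ) :=
    Complex.ofRealCLM.contDiff.comp
      ((contDiff_const.sub contDiff_cut).sub (contDiff_cut.comp contDiff_neg))
  have h3 : ContDiff ℝ (⊤ : ℕ∞) fun θ : ℝ => Complex.exp (-(Complex.I * θ)) :=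
    (contDiff_const.mul Complex.ofRealCLM.contDiff).neg.cexp
  have h4 : ContDiff ℝ (⊤ : ℕ∞) fun θ : ℝ => (J1 θ : ℂ) :=
    Complex.ofRealCLM.contDiff.comp contDiff_J1
  exact (contDiff_cutAmp.sub h1).add (h2.mul (h3.mul h4))

lemma besselAmp_of_ge {θ : ℝ} (h : 2 ≤ θ) : besselAmp θ = amp 0 θ := by
  simp [besselAmp, cutAmp, cut_of_ge h, cut_of_le (show -θ ≤ 1 by linarith)]

lemma besselAmp_of_le {θ : ℝ} (h : θ ≤ -2) :
    besselAmp θ = -(starRingEnd ℂ) (amp 0 (-θ)) := by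
  simp [besselAmp, cutAmp, cut_of_le (show θ ≤ 1 by linarith),
    cut_of_ge (show 2 ≤ -θ by linarith)]

lemma J1_eq_re_besselAmp (θ : ℝ) : J1 θ = (Complex.exp (Complex.I * θ) * besselAmp θ).re := by
  have h1 : (Complex.exp (Complex.I * θ) * (starRingEnd ℂ) (cutAmp (-θ))).re
      = -(cut (-θ) * J1 θ) := by
    have e : Complex.exp (Complex.I * θ) * (starRingEnd ℂ) (cutAmp (-θ))
        = (starRingEnd ℂ) (Complex.exp (Complex.I * (-θ : ℝ)) * cutAmp (-θ)) := by
      rw [map_mul, ← Complex.exp_conj]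
      simp
    rw [e, Complex.conj_re, re_exp_mul_cutAmp]
    rcases eq_or_ne θ 0 with rfl | h
    · simp [cut_of_le (zero_le_one (α := ℝ))]
    · rw [J1_neg h]; ring
  have h2 : Complex.exp (Complex.I * θ) *
      (((1 - cut θ - cut (-θ) : ℝ) : ℂ) * (Complex.exp (-(Complex.I * θ)) * (J1 θ : ℂ)))
      = (((1 - cut θ - cut (-θ)) * J1 θ : ℝ) : ℂ) := by
    have := Complex.exp_ne_zero (Complex.I * θ)
    rw [Complex.exp_neg]
    push_cast
    field_simp
  rw [besselAmp, mul_add, mul_sub, h2, Complex.add_re, Complex.sub_re, h1, re_exp_mul_cutAmp,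
    Complex.ofReal_re]
  ring

lemma norm_iteratedDeriv_neg_conj (g : ℝ → ℂ) (m : ℕ) (θ : ℝ) :
    ‖iteratedDeriv m (fun x => -(starRingEnd ℂ) (g (-x))) θ‖ = ‖iteratedDeriv m g (-θ)‖ := by
  rw [iteratedDeriv_comp_neg m (fun x => -(starRingEnd ℂ) (g x)) θ, norm_smul, norm_pow, norm_neg,
    norm_one, one_pow, one_mul, iteratedDeriv_fun_neg, norm_neg,
    ← norm_iteratedFDeriv_eq_norm_iteratedDeriv, ← norm_iteratedFDeriv_eq_norm_iteratedDeriv]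
  exact Complex.conjLIE.norm_iteratedFDeriv_comp_left g (-θ) m

lemma norm_iteratedDeriv_besselAmp {θ : ℝ} (m : ℕ) (h : 2 < |θ|) :
    ‖iteratedDeriv m besselAmp θ‖ = ‖amp m |θ|‖ := by
  have hamp : ∀ x, 0 < x → iteratedDeriv m (amp 0) x = amp m x := fun x hx =>
    iteratedDeriv_tower isOpen_Ioi (s := Ioi 0) (fun m x hx => hasDerivAt_amp m hx) m x hx
  rcases lt_abs.1 h with h | h
  · rw [abs_of_pos (by linarith), ← hamp θ (by linarith)]
    congr 1
    refine Filter.EventuallyEq.iteratedDeriv_eq m ?_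
    filter_upwards [Ioi_mem_nhds h] with x hx
    exact besselAmp_of_ge (le_of_lt hx)
  · rw [abs_of_neg (by linarith), ← hamp (-θ) (by linarith), ← norm_iteratedDeriv_neg_conj]
    congr 1
    refine Filter.EventuallyEq.iteratedDeriv_eq m ?_
    filter_upwards [Iio_mem_nhds (show θ < -2 by linarith)] with x hx
    exact besselAmp_of_le (le_of_lt hx)

lemma norm_iteratedDeriv_besselAmp_le (m : ℕ) : ∃ C : ℝ, 0 < C ∧ ∀ θ : ℝ,
    ‖iteratedDeriv m besselAmp θ‖ ≤ C * (max 1 |θ|) ^ (-((m : ℝ) + 1 / 2)) := by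
  obtain ⟨C, hC, h⟩ := norm_amp_le m
  have hcont : Continuous (iteratedDeriv m besselAmp) :=
    contDiff_besselAmp.continuous_iteratedDeriv m (by exact_mod_cast le_top)
  obtain ⟨M, hM⟩ := (isCompact_Icc (a := (-2 : ℝ)) (b := 2)).exists_bound_of_continuousOn
    hcont.continuousOn
  have hM0 : 0 ≤ M := (norm_nonneg _).trans (hM 0 (by norm_num))
  have h2 : (0 : ℝ) < 2 ^ ((m : ℝ) + 1 / 2) := by positivity
  refine ⟨C + M * 2 ^ ((m : ℝ) + 1 / 2), by positivity, fun θ => ?_⟩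
  have hpos : 0 < max 1 |θ| := lt_max_of_lt_left one_pos
  have hp := Real.rpow_pos_of_pos hpos (-((m : ℝ) + 1 / 2))
  rw [add_mul]
  rcases lt_or_ge 2 |θ| with hθ | hθ
  · have h1 : 1 ≤ |θ| := by linarith
    have := h |θ| h1
    rw [norm_iteratedDeriv_besselAmp m hθ]
    rw [max_eq_right h1] at hp ⊢
    have : 0 ≤ M * 2 ^ ((m : ℝ) + 1 / 2) * |θ| ^ (-((m : ℝ) + 1 / 2)) := by positivity
    linarith
  · have h1 : (2 : ℝ) ^ (-((m : ℝ) + 1 / 2)) ≤ (max 1 |θ|) ^ (-((m : ℝ) + 1 / 2)) :=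
      Real.rpow_le_rpow_of_nonpos hpos (max_le one_le_two hθ)
        (by have : (0 : ℝ) ≤ m := m.cast_nonneg
            linarith)
    have h3 : M = M * 2 ^ ((m : ℝ) + 1 / 2) * 2 ^ (-((m : ℝ) + 1 / 2)) := by
      rw [mul_assoc, ← Real.rpow_add two_pos, add_neg_cancel, Real.rpow_zero, mul_one]
    have h4 := hM θ (abs_le.1 hθ)
    have h5 := mul_le_mul_of_nonneg_left h1 (show 0 ≤ M * 2 ^ ((m : ℝ) + 1 / 2) by positivity)
    have h6 : 0 < C * (max 1 |θ|) ^ (-((m : ℝ) + 1 / 2)) := by positivity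
    linarith

end Asymptotics

/-- decomposition J₁(θ) = Re(e^{iθ} r(θ)) with decay and lower bounds for r. -/
theorem statement4 :
    ∃ r : ℝ → ℂ, ContDiff ℝ (⊤ : ℕ∞) r ∧
      (∀ θ : ℝ, J1 θ = (Complex.exp (Complex.I * (θ : ℂ)) * r θ).re) ∧
      (∀ m : ℕ, ∃ C : ℝ, 0 < C ∧ ∀ θ : ℝ,
        ‖iteratedDeriv m r θ‖ ≤ C * (max 1 |θ|) ^ (-((m : ℝ) + 1 / 2))) ∧
      (∃ θstar : ℝ, 0 < θstar ∧ ∃ cstar : ℝ, 0 < cstar ∧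
        ∀ θ : ℝ, θstar < |θ| → cstar * |θ| ^ (-(1 / 2 : ℝ)) ≤ ‖r θ‖) := by
  refine ⟨besselAmp, contDiff_besselAmp, J1_eq_re_besselAmp, norm_iteratedDeriv_besselAmp_le,
    2, two_pos, 2 / π * Real.Gamma (3 / 2), ?_, fun θ hθ => ?_⟩
  · have := Real.Gamma_pos_of_pos (show (0 : ℝ) < 3 / 2 by norm_num)
    have := Real.pi_pos
    positivity
  · have h := norm_iteratedDeriv_besselAmp 0 hθ
    rw [iteratedDeriv_zero] at h
    rw [h]
    exact le_norm_amp_zero (two_pos.trans hθ)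
end
end

section
/- For every ε > 0 there exist constants 0 < λ_ε < Λ_ε such that λ_ε |θ|^{−1} ≤ J₁(θ)² + J₁'(θ)² ≤ Λ_ε |θ|^{−1} for all θ ∈ ℝ with |θ| ≥ ε. In particular, J₁ and its derivative J₁' have no common zero in ℝ \ {0}. -/
/-!
The function `J1` solves Bessel's equation `x² y'' + x y' + (x² - 1) y = 0`. The Liouville
substitution `u = √x · y` turns it into `u'' + (1 - 3 / (4 x²)) u = 0` on `x > 0`, a perturbation
of the harmonic oscillator by an integrable potential. Its energy
`E = u² + u'² = x y² + (x y' + y / 2)² / x` satisfies `|E'| ≤ 3 / (4 x²) · E`, so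
`E · exp (-3 / (4 x))` increases and `E · exp (3 / (4 x))` decreases: on `[ε, ∞)` the energy stays
between two constant multiples of `E ε`, and `y² + y'²` is comparable to `E / x` there.

If `E` vanished at one positive point, the first monotonicity would make it vanish on the whole
interval down to `0`, forcing `y'(0) = 0`; but `J1' 0 = 1 / 2`. Negative arguments are covered by
applying the same argument to `x ↦ J1 (-x)`, which solves the same equation.
-/

open scoped Real BigOperators
open MeasureTheory

noncomputable section

/-- The oscillator energy `u² + u'²` of `u x = √x * y x`, written without square roots in terms of
`y` and `z = y'`. -/
def besselEnergy (y z : ℝ → ℝ) (x : ℝ) : ℝ :=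
  x * y x ^ 2 + (x * z x + y x / 2) ^ 2 / x

lemma besselEnergy_nonneg (y z : ℝ → ℝ) {x : ℝ} (hx : 0 < x) : 0 ≤ besselEnergy y z x := by
  unfold besselEnergy; positivity

lemma hasDerivAt_besselEnergy_mul_exp {y z q : ℝ → ℝ} (hy : ∀ x, HasDerivAt y (z x) x)
    (hz : ∀ x, HasDerivAt z (q x) x)
    (hq : ∀ x, x ^ 2 * q x + x * z x + (x ^ 2 - 1) * y x = 0) (c : ℝ) {x : ℝ} (hx : 0 < x) :
    HasDerivAt (fun t => besselEnergy y z t * Real.exp (c / t))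
      (Real.exp (c / x) / x ^ 2 *
        (3 / 2 * (y x * (x * z x + y x / 2)) - c * besselEnergy y z x)) x := by
  have hx0 : x ≠ 0 := hx.ne'
  have h1 := (hasDerivAt_id x).mul ((hy x).pow 2)
  have h2 := ((((hasDerivAt_id x).mul (hz x)).add ((hy x).div_const 2)).pow 2).div
    (hasDerivAt_id x) hx0
  have h3 := (((hasDerivAt_const x c).div (hasDerivAt_id x) hx0)).exp
  have hqx : q x = -(x * z x + (x ^ 2 - 1) * y x) / x ^ 2 := by
    rw [eq_div_iff (by positivity)]; linarith [hq x]
  refine ((h1.add h2).mul h3).congr_deriv ?_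
  simp only [Pi.add_apply, Pi.mul_apply, Pi.pow_apply, Pi.div_apply, id, besselEnergy]
  rw [hqx]
  field_simp
  ring

/-- Because `|E'| ≤ 3 / (4 x²) · E` for the energy `E`, the weight `exp (∓ 3 / (4 x))` makes `E`
monotone, respectively antitone. -/
lemma besselEnergy_monotone {y z q : ℝ → ℝ} (hy : ∀ x, HasDerivAt y (z x) x)
    (hz : ∀ x, HasDerivAt z (q x) x)
    (hq : ∀ x, x ^ 2 * q x + x * z x + (x ^ 2 - 1) * y x = 0) :
    MonotoneOn (fun t => besselEnergy y z t * Real.exp (-(3 / 4) / t)) (Set.Ioi 0) ∧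
    AntitoneOn (fun t => besselEnergy y z t * Real.exp ((3 / 4) / t)) (Set.Ioi 0) := by
  have key := fun c x hx => hasDerivAt_besselEnergy_mul_exp hy hz hq c (x := x) hx
  -- Young's inequality `2 |y w| ≤ x y² + w² / x`, via the squares `(x y ± w)² / x`.
  have young : ∀ x : ℝ, 0 < x → 2 * |y x * (x * z x + y x / 2)| ≤ besselEnergy y z x := by
    intro x hx
    set w := x * z x + y x / 2 with hw
    have e : besselEnergy y z x = ((x * y x) ^ 2 + w ^ 2) / x := by
      unfold besselEnergy; rw [← hw]; field_simp
    rw [e, le_div_iff₀ hx]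
    rcases abs_cases (y x * w) with ⟨h, _⟩ | ⟨h, _⟩ <;> rw [h]
    · nlinarith [sq_nonneg (x * y x - w)]
    · nlinarith [sq_nonneg (x * y x + w)]
  constructor
  · refine monotoneOn_of_deriv_nonneg (convex_Ioi 0)
      (fun x hx => (key _ x hx).continuousAt.continuousWithinAt) ?_ ?_
    · intro x hx
      rw [interior_Ioi] at hx
      exact (key _ x hx).differentiableAt.differentiableWithinAt
    · intro x hx
      rw [interior_Ioi] at hx
      rw [(key _ x hx).deriv]
      have := young x hx
      have := neg_abs_le (y x * (x * z x + y x / 2))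
      exact mul_nonneg (by positivity) (by linarith)
  · refine antitoneOn_of_deriv_nonpos (convex_Ioi 0)
      (fun x hx => (key _ x hx).continuousAt.continuousWithinAt) ?_ ?_
    · intro x hx
      rw [interior_Ioi] at hx
      exact (key _ x hx).differentiableAt.differentiableWithinAt
    · intro x hx
      rw [interior_Ioi] at hx
      rw [(key _ x hx).deriv]
      have := young x hx
      have := le_abs_self (y x * (x * z x + y x / 2))
      exact mul_nonpos_of_nonneg_of_nonpos (by positivity) (by linarith)

/-- A solution of Bessel's equation of order one with `y'(0) ≠ 0` has positive energy at every
positive point: a zero would propagate down to the origin. -/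
lemma besselEnergy_pos {y z q : ℝ → ℝ} (hy : ∀ x, HasDerivAt y (z x) x)
    (hz : ∀ x, HasDerivAt z (q x) x)
    (hq : ∀ x, x ^ 2 * q x + x * z x + (x ^ 2 - 1) * y x = 0) (h0 : z 0 ≠ 0)
    {ε : ℝ} (hε : 0 < ε) : 0 < besselEnergy y z ε := by
  refine lt_of_le_of_ne (besselEnergy_nonneg y z hε) fun hE => h0 ?_
  have hzero : ∀ x ∈ Set.Ioo 0 ε, z x = 0 := by
    intro x hx
    have hx0 : 0 < x := hx.1
    have h := (besselEnergy_monotone hy hz hq).1 hx.1 hε hx.2.le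
    simp only [← hE, zero_mul] at h
    have h1 : besselEnergy y z x ≤ 0 := nonpos_of_mul_nonpos_left h (Real.exp_pos _)
    unfold besselEnergy at h1
    have h2 : 0 ≤ x * y x ^ 2 := by positivity
    have h3 : 0 ≤ (x * z x + y x / 2) ^ 2 / x := by positivity
    have h4 : x * y x ^ 2 = 0 := by linarith
    have h5 : (x * z x + y x / 2) ^ 2 / x = 0 := by linarith
    have h6 : y x = 0 := by simpa [hx0.ne'] using h4
    simpa [hx0.ne', h6] using h5
  have hlim : Filter.Tendsto z (nhdsWithin 0 (Set.Ioi 0)) (nhds (z 0)) :=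
    (hz 0).continuousAt.tendsto.mono_left nhdsWithin_le_nhds
  refine tendsto_nhds_unique hlim (tendsto_const_nhds.congr' ?_)
  filter_upwards [Ioo_mem_nhdsGT hε] with x hx using (hzero x hx).symm

lemma bessel_two_sided {y z q : ℝ → ℝ} (hy : ∀ x, HasDerivAt y (z x) x)
    (hz : ∀ x, HasDerivAt z (q x) x)
    (hq : ∀ x, x ^ 2 * q x + x * z x + (x ^ 2 - 1) * y x = 0) (h0 : z 0 ≠ 0)
    {ε : ℝ} (hε : 0 < ε) :
    ∃ lam Lam : ℝ, 0 < lam ∧ ∀ x, ε ≤ x →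
      lam * x⁻¹ ≤ y x ^ 2 + z x ^ 2 ∧ y x ^ 2 + z x ^ 2 ≤ Lam * x⁻¹ := by
  have hE := besselEnergy_pos hy hz hq h0 hε
  obtain ⟨hm, ha⟩ := besselEnergy_monotone hy hz hq
  -- With `t = 1 / (2 x) ≤ k`, the constant `K` compares `y² + z²` with `y² + (z + t y)² = E / x`.
  set k : ℝ := (2 * ε)⁻¹ with hk
  have hk0 : 0 < k := by positivity
  set K : ℝ := 2 + 2 * k ^ 2 with hK
  have hKpos : 0 < K := by positivity
  set m := besselEnergy y z ε * Real.exp (-(3 / 4) / ε) with hmdef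
  set M := besselEnergy y z ε * Real.exp ((3 / 4) / ε) with hMdef
  have hmpos : 0 < m := by positivity
  refine ⟨m / K, M * K, by positivity, fun x hx => ?_⟩
  have hx0 : 0 < x := hε.trans_le hx
  have hF0 := besselEnergy_nonneg y z hx0
  have hlow : m ≤ besselEnergy y z x := by
    refine (hm hε hx0 hx).trans (mul_le_of_le_one_right hF0 ?_)
    rw [Real.exp_le_one_iff]
    exact div_nonpos_of_nonpos_of_nonneg (by norm_num) hx0.le
  have hup : besselEnergy y z x ≤ M := by
    refine le_trans (le_mul_of_one_le_right hF0 ?_) (ha hε hx0 hx)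
    rw [Real.one_le_exp_iff]; positivity
  set t : ℝ := (2 * x)⁻¹ with ht
  have ht0 : 0 < t := by positivity
  have htk : t ≤ k := by rw [ht, hk]; gcongr
  have htk2 : t ^ 2 ≤ k ^ 2 := by gcongr
  have hF : besselEnergy y z x = x * (y x ^ 2 + (z x + t * y x) ^ 2) := by
    rw [ht]; unfold besselEnergy; field_simp
  set R := y x ^ 2 + (z x + t * y x) ^ 2 with hR
  have hty := mul_le_mul_of_nonneg_right htk2 (sq_nonneg (y x))
  have c1 : R ≤ K * (y x ^ 2 + z x ^ 2) := by
    rw [hR, hK]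
    nlinarith [sq_nonneg (z x - t * y x), mul_nonneg (sq_nonneg k) (sq_nonneg (z x)),
      sq_nonneg (y x)]
  have c2 : y x ^ 2 + z x ^ 2 ≤ K * R := by
    rw [hR, hK]
    nlinarith [sq_nonneg (z x + 2 * (t * y x)),
      mul_nonneg (sq_nonneg k) (sq_nonneg (z x + t * y x)), sq_nonneg (y x)]
  rw [hF] at hlow hup
  rw [← div_eq_mul_inv, ← div_eq_mul_inv, div_le_iff₀ hx0, div_le_iff₀ hKpos, le_div_iff₀ hx0]
  constructor
  · nlinarith [mul_le_mul_of_nonneg_left c1 hx0.le]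
  · nlinarith [mul_le_mul_of_nonneg_left c2 hx0.le, mul_le_mul_of_nonneg_right hup hKpos.le]

/-- Differentiation under the integral sign for the phase `x sin φ - φ` and a bounded `f'`. -/
lemma hasDerivAt_phase_integral {f f' g : ℝ → ℝ} (hf : ∀ x, HasDerivAt f (f' x) x)
    (hf'c : Continuous f') (hf'1 : ∀ x, |f' x| ≤ 1) (hg : Continuous g) (x : ℝ) :
    HasDerivAt (fun x => ∫ φ in (0:ℝ)..(2 * π), g φ * f (x * Real.sin φ - φ))
      (∫ φ in (0:ℝ)..(2 * π), g φ * (f' (x * Real.sin φ - φ) * Real.sin φ)) x := by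
  have hfc : Continuous f := continuous_iff_continuousAt.2 fun x => (hf x).continuousAt
  refine (intervalIntegral.hasDerivAt_integral_of_dominated_loc_of_deriv_le
    (μ := volume) (F := fun t φ => g φ * f (t * Real.sin φ - φ))
    (F' := fun t φ => g φ * (f' (t * Real.sin φ - φ) * Real.sin φ))
    (bound := fun φ => |g φ|) (s := Set.univ) Filter.univ_mem
    (Filter.Eventually.of_forall fun t => ?_) ?_ ?_ ?_ ?_ ?_).2
  · exact (by fun_prop : Continuous fun φ => g φ * f (t * Real.sin φ - φ)).aestronglyMeasurable
  · exact (by fun_prop : Continuous fun φ => g φ * f (x * Real.sin φ - φ)).intervalIntegrable _ _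
  · exact (by fun_prop : Continuous fun φ =>
      g φ * (f' (x * Real.sin φ - φ) * Real.sin φ)).aestronglyMeasurable
  · refine Filter.Eventually.of_forall fun φ _ t _ => ?_
    rw [Real.norm_eq_abs, abs_mul, abs_mul]
    exact mul_le_of_le_one_right (abs_nonneg _)
      (mul_le_one₀ (hf'1 _) (abs_nonneg _) (Real.abs_sin_le_one _))
  · exact (by fun_prop : Continuous fun φ => |g φ|).intervalIntegrable _ _
  · refine Filter.Eventually.of_forall fun φ _ t _ => ?_
    have h := (hf (t * Real.sin φ - φ)).comp t
      (((hasDerivAt_id t).mul_const (Real.sin φ)).sub_const φ)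
    exact (h.const_mul (g φ)).congr_deriv (by simp)

lemma J1_eq (x : ℝ) :
    J1 x = (2 * π)⁻¹ * ∫ φ in (0:ℝ)..(2 * π), 1 * Real.cos (x * Real.sin φ - φ) := by
  unfold J1
  have hc : Continuous fun φ : ℝ => Complex.exp (Complex.I * (x : ℂ) * (Real.sin φ : ℂ)) *
      Complex.exp (-Complex.I * (φ : ℂ)) := by fun_prop
  have e : (1 / (2 * (π : ℂ))) = (((2 * π)⁻¹ : ℝ) : ℂ) := by push_cast; simp
  rw [e, Complex.re_ofReal_mul]
  congr 1
  have h := ContinuousLinearMap.intervalIntegral_comp_comm Complex.reCLM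
    (hc.intervalIntegrable (μ := volume) 0 (2 * π))
  rw [← Complex.reCLM_apply, ← h]
  refine intervalIntegral.integral_congr fun φ _ => ?_
  simp only [Complex.reCLM_apply]
  rw [← Complex.exp_add, one_mul, ← Complex.exp_ofReal_mul_I_re]
  congr 2
  push_cast
  ring

/-- The derivative of `J1`, as an explicit integral. -/
def J1d (x : ℝ) : ℝ :=
  (2 * π)⁻¹ * ∫ φ in (0:ℝ)..(2 * π), (-Real.sin φ) * Real.sin (x * Real.sin φ - φ)

/-- The second derivative of `J1`, as an explicit integral. -/
def J1dd (x : ℝ) : ℝ :=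
  (2 * π)⁻¹ * ∫ φ in (0:ℝ)..(2 * π),
    (-Real.sin φ) * (Real.cos (x * Real.sin φ - φ) * Real.sin φ)

lemma hasDerivAt_J1 (x : ℝ) : HasDerivAt J1 (J1d x) x := by
  have h := (hasDerivAt_phase_integral Real.hasDerivAt_cos (by fun_prop)
    (fun x => by simpa using Real.abs_sin_le_one x) (continuous_const (y := (1:ℝ))) x).const_mul
      (2 * π)⁻¹
  rw [funext J1_eq]
  refine h.congr_deriv ?_
  unfold J1d
  congr 1
  exact intervalIntegral.integral_congr fun φ _ => by ring

lemma hasDerivAt_J1d (x : ℝ) : HasDerivAt J1d (J1dd x) x :=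
  (hasDerivAt_phase_integral Real.hasDerivAt_sin (by fun_prop) Real.abs_cos_le_one
    Real.continuous_sin.neg x).const_mul (2 * π)⁻¹

/-- Bessel's equation: with `A = x sin φ - φ`, its left-hand side is the integral over a period of
the exact derivative of the periodic function `sin A * (x cos φ + 1)`. -/
lemma J1_bessel (x : ℝ) : x ^ 2 * J1dd x + x * J1d x + (x ^ 2 - 1) * J1 x = 0 := by
  have hd : ∀ φ : ℝ, HasDerivAt
      (fun φ => Real.sin (x * Real.sin φ - φ) * (x * Real.cos φ + 1))
      (x ^ 2 * ((-Real.sin φ) * (Real.cos (x * Real.sin φ - φ) * Real.sin φ)) +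
        x * ((-Real.sin φ) * Real.sin (x * Real.sin φ - φ)) +
        (x ^ 2 - 1) * (1 * Real.cos (x * Real.sin φ - φ))) φ := by
    intro φ
    have h1 := (((Real.hasDerivAt_sin φ).const_mul x).sub (hasDerivAt_id φ)).sin
    have h2 := ((Real.hasDerivAt_cos φ).const_mul x).add_const 1
    refine (h1.mul h2).congr_deriv ?_
    simp only [Pi.sub_apply, id]
    linear_combination
      (x ^ 2 * Real.cos (x * Real.sin φ - φ)) * Real.sin_sq_add_cos_sq φ
  have hint := intervalIntegral.integral_eq_sub_of_hasDerivAt (a := 0) (b := 2 * π)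
    (fun φ _ => hd φ) (Continuous.intervalIntegrable (by fun_prop) _ _)
  rw [intervalIntegral.integral_add (Continuous.intervalIntegrable (by fun_prop) _ _)
      (Continuous.intervalIntegrable (by fun_prop) _ _),
    intervalIntegral.integral_add (Continuous.intervalIntegrable (by fun_prop) _ _)
      (Continuous.intervalIntegrable (by fun_prop) _ _),
    intervalIntegral.integral_const_mul, intervalIntegral.integral_const_mul,
    intervalIntegral.integral_const_mul] at hint
  simp only [Real.sin_two_pi, Real.sin_zero, mul_zero, zero_sub, Real.sin_neg, neg_zero, sub_zero,
    zero_mul] at hint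
  rw [J1_eq, J1d, J1dd]
  linear_combination (2 * π)⁻¹ * hint

lemma J1d_zero : J1d 0 = 1 / 2 := by
  unfold J1d
  have : ∀ φ : ℝ, (-Real.sin φ) * Real.sin (0 * Real.sin φ - φ) = Real.sin φ ^ 2 := by
    intro φ
    rw [zero_mul, zero_sub, Real.sin_neg]; ring
  simp only [this, integral_sin_sq]
  simp
  field_simp

/-- two-sided bounds for J₁² + (J₁')² and absence of common zeros. -/
theorem statement5 (ε : ℝ) (hε : 0 < ε) :
    (∃ lam Lam : ℝ, 0 < lam ∧ lam < Lam ∧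
      ∀ θ : ℝ, ε ≤ |θ| →
        lam * |θ|⁻¹ ≤ J1 θ ^ 2 + deriv J1 θ ^ 2 ∧
          J1 θ ^ 2 + deriv J1 θ ^ 2 ≤ Lam * |θ|⁻¹) ∧
    (∀ θ : ℝ, θ ≠ 0 → ¬ (J1 θ = 0 ∧ deriv J1 θ = 0)) := by
  have bounds : ∀ δ : ℝ, 0 < δ → ∃ lam Lam : ℝ, 0 < lam ∧ lam < Lam ∧
      ∀ θ : ℝ, δ ≤ |θ| →
        lam * |θ|⁻¹ ≤ J1 θ ^ 2 + deriv J1 θ ^ 2 ∧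
          J1 θ ^ 2 + deriv J1 θ ^ 2 ≤ Lam * |θ|⁻¹ := by
    intro δ hδ
    have h0 : J1d 0 ≠ 0 := by rw [J1d_zero]; norm_num
    obtain ⟨l₁, L₁, hl₁, h₁⟩ := bessel_two_sided hasDerivAt_J1 hasDerivAt_J1d J1_bessel h0 hδ
    -- The reflected function `x ↦ J1 (-x)` solves the same equation.
    have hr₁ : ∀ x, HasDerivAt (fun x => J1 (-x)) (-J1d (-x)) x := fun x =>
      ((hasDerivAt_J1 (-x)).comp x (hasDerivAt_neg x)).congr_deriv (by ring)
    have hr₂ : ∀ x, HasDerivAt (fun x => -J1d (-x)) (J1dd (-x)) x := fun x =>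
      ((hasDerivAt_J1d (-x)).comp x (hasDerivAt_neg x)).neg.congr_deriv (by ring)
    obtain ⟨l₂, L₂, hl₂, h₂⟩ := bessel_two_sided hr₁ hr₂
      (fun x => by linear_combination J1_bessel (-x)) (by simpa using h0) hδ
    refine ⟨min l₁ l₂, max (max L₁ L₂) (min l₁ l₂ + 1), lt_min hl₁ hl₂,
      lt_of_lt_of_le (lt_add_one _) (le_max_right _ _), fun θ hθ => ?_⟩
    have hi : 0 ≤ |θ|⁻¹ := by positivity
    rw [(hasDerivAt_J1 θ).deriv]
    rcases le_total 0 θ with hs | hs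
    · rw [abs_of_nonneg hs] at *
      obtain ⟨ha, hb⟩ := h₁ θ hθ
      exact ⟨(mul_le_mul_of_nonneg_right (min_le_left _ _) hi).trans ha,
        hb.trans (mul_le_mul_of_nonneg_right ((le_max_left _ _).trans (le_max_left _ _)) hi)⟩
    · rw [abs_of_nonpos hs] at *
      obtain ⟨ha, hb⟩ := h₂ (-θ) hθ
      simp only [neg_neg, neg_sq] at ha hb
      exact ⟨(mul_le_mul_of_nonneg_right (min_le_right _ _) hi).trans ha,
        hb.trans (mul_le_mul_of_nonneg_right ((le_max_right _ _).trans (le_max_left _ _)) hi)⟩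
  refine ⟨bounds ε hε, fun θ hθ ⟨hJ, hJ'⟩ => ?_⟩
  obtain ⟨lam, Lam, hlam, -, h⟩ := bounds |θ| (abs_pos.2 hθ)
  have h1 := (h θ le_rfl).1
  rw [hJ, hJ'] at h1
  have : 0 < lam * |θ|⁻¹ := mul_pos hlam (inv_pos.2 (abs_pos.2 hθ))
  linarith
end
end
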